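/- arXiv:1006.5285 — 3 statements merged into one kernel-verified Lean document; each statement's English description precedes it below -/
import Mathlib

section
/- Let G be a Hausdorff topological group and let H be a dense subgroup of G (with the subspace topology). Then H is locally minimal if and only if G is locally minimal and H is locally essential in G. -/
/-- A Hausdorff topological group `(G, τ)` is *locally minimal* if there exists a
neighborhood `V` of the identity such that the only Hausdorff group topology `σ`
coarser than `τ` for which `V` is still a `σ`-neighborhood of the identity is `τ` itself. -/
def LocallyMinimal (G : Type*) [Group G] [τ : TopologicalSpace G] : Prop :=
  ∃ V ∈ nhds (1 : G), ∀ σ : TopologicalSpace G, τ ≤ σ →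
    @IsTopologicalGroup G σ _ → @T2Space G σ → V ∈ @nhds G σ 1 → σ = τ

/-- A subgroup `H` of a topological group `G` is *locally essential* if there is a
neighborhood `V` of the identity such that every closed normal subgroup `N ⊆ V`
with `H ⊓ N = ⊥` is trivial. -/
def LocallyEssential {G : Type*} [Group G] [TopologicalSpace G] (H : Subgroup G) : Prop :=
  ∃ V ∈ nhds (1 : G), ∀ N : Subgroup G, N.Normal → IsClosed (N : Set G) →
    (N : Set G) ⊆ V → H ⊓ N = ⊥ → N = ⊥


/-!
Comparing the topology of a group with coarser Hausdorff group topologies amounts to studying its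
continuous injective homomorphisms `j` into Hausdorff groups: the topologies agree exactly when `j`
is inducing.

If `H` is dense in `G`, a continuous homomorphism on `G` is inducing as soon as its restriction to
`H` is, by regularity of `G`. Taking `j` to be the identity onto `G` with a coarser topology, local
minimality passes from `H` to `G`; taking `j` to be `G → G ⧸ N`, which is inducing only if `N` is
trivial, it makes `H` locally essential.

Conversely, let `σ` be a coarser group topology on `H`. The closures in `G` of the
`σ`-neighborhoods of `1` form a neighborhood basis of `1` for a group topology on `G` inducing `σ`.
It may fail to be Hausdorff, so let `j` be the map from `G` to its Hausdorff quotient. Local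
essentiality makes `j` injective, local minimality of `G` then makes it inducing, and so `σ` is the
subspace topology.
-/

open Topology Filter Set

universe u

/-- Local minimality of a group witnessed by a given set `V`, so that the witness can be carried
from a group to a dense subgroup and back. That `V` is a neighborhood of the identity is not part
of the definition. -/
def LocallyMinimalWith {G : Type*} [Group G] [τ : TopologicalSpace G] (V : Set G) : Prop :=
  ∀ σ : TopologicalSpace G, τ ≤ σ →
    @IsTopologicalGroup G σ _ → @T2Space G σ → V ∈ @nhds G σ 1 → σ = τ

/-- Local essentiality of a subgroup witnessed by a given set `V`, the counterpart of
`LocallyMinimalWith`. That `V` is a neighborhood of the identity is not part of the definition. -/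
def LocallyEssentialWith {G : Type*} [Group G] [TopologicalSpace G] (H : Subgroup G)
    (V : Set G) : Prop :=
  ∀ N : Subgroup G, N.Normal → IsClosed (N : Set G) → (N : Set G) ⊆ V → H ⊓ N = ⊥ → N = ⊥

section Dense

variable {X Y Z : Type*} [τ : TopologicalSpace X] [TopologicalSpace Y] [σ : TopologicalSpace Z]

theorem closure_image_mem_nhds_of_induced_le {f : Z → X} (hf : DenseRange f)
    (hle : τ.induced f ≤ σ) {U : Set Z} {z : Z} (hU : U ∈ 𝓝 z) : closure (f '' U) ∈ 𝓝 (f z) :=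
  have hdense : @IsDenseInducing Z X (τ.induced f) τ f :=
    @IsDenseInducing.mk Z X (τ.induced f) τ f (.induced f) hf
  @IsDenseInducing.closure_image_mem_nhds Z X (τ.induced f) τ f U z hdense (nhds_mono hle hU)

theorem preimage_closure_image_subset_of_induced_le {f : Z → X} (hle : τ.induced f ≤ σ)
    (U : Set Z) : f ⁻¹' closure (f '' U) ⊆ closure U :=
  fun _ hz ↦ closure.mono hle (closure_induced.2 hz)

theorem comap_nhds_le_of_isInducing_comp [RegularSpace X] {f : Z → X} {j : X → Y}
    (hf : DenseRange f) (hfc : Continuous f) (hj : Continuous j) (hjf : IsInducing (j ∘ f))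
    (z : Z) : comap j (𝓝 (j (f z))) ≤ 𝓝 (f z) := by
  intro U hU
  obtain ⟨C, hC, hCclosed, hCU⟩ := exists_mem_nhds_isClosed_subset hU
  have hfC : f ⁻¹' C ∈ comap (j ∘ f) (𝓝 (j (f z))) :=
    hjf.nhds_eq_comap z ▸ hfc.continuousAt.preimage_mem_nhds hC
  obtain ⟨O, ⟨hzO, hO⟩, hOC⟩ := ((nhds_basis_opens _).comap (j ∘ f)).mem_iff.1 hfC
  refine mem_of_superset (preimage_mem_comap (hO.mem_nhds hzO)) ?_
  calc j ⁻¹' O ⊆ closure (f '' (f ⁻¹' (j ⁻¹' O))) :=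
        hf.subset_closure_image_preimage_of_isOpen (hO.preimage hj)
    _ ⊆ C := closure_minimal (image_subset_iff.2 hOC) hCclosed
    _ ⊆ U := hCU

end Dense

theorem isInducing_of_isInducing_comp_of_denseRange {G K L : Type*} [Group G] [TopologicalSpace G]
    [IsTopologicalGroup G] [Group K] [TopologicalSpace K] [Group L] [TopologicalSpace L]
    [IsTopologicalGroup L] {ι : K →* G} {j : G →* L} (hd : DenseRange ι) (hι : Continuous ι)
    (hj : Continuous j) (hjι : IsInducing (j ∘ ι)) : IsInducing j := by
  refine IsTopologicalGroup.isInducing_iff_nhds_one.2 (le_antisymm ?_ ?_)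
  · simpa only [map_one] using (hj.tendsto 1).le_comap
  · simpa only [map_one] using comap_nhds_le_of_isInducing_comp hd hι hj hjι 1

theorem exists_nhds_one_conj_mem {K : Type*} [Group K] [TopologicalSpace K] [IsTopologicalGroup K]
    {U : Set K} (hU : U ∈ 𝓝 1) : ∃ V ∈ 𝓝 (1 : K), ∀ u ∈ V, ∀ v ∈ V, u * v * u⁻¹ ∈ U := by
  have hcont : Continuous fun p : K × K ↦ p.1 * p.2 * p.1⁻¹ := by fun_prop
  have hmem : (fun p : K × K ↦ p.1 * p.2 * p.1⁻¹) ⁻¹' U ∈ 𝓝 ((1, 1) : K × K) :=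
    hcont.continuousAt.preimage_mem_nhds (by simpa using hU)
  simpa only [nhds_prod_eq, mem_prod_self_iff, prod_subset_iff, mem_preimage] using hmem

section ClosureImageBasis

variable {G K : Type*} [Group G] [τ : TopologicalSpace G] [IsTopologicalGroup G]
  [Group K] [σ : TopologicalSpace K]

theorem exists_mul_inv_mem_closure_image {ι : K →* G} (hd : DenseRange ι)
    (hle : τ.induced ι ≤ σ) (g : G) {U : Set K} (hU : U ∈ 𝓝 1) :
    ∃ k, g * (ι k)⁻¹ ∈ closure (ι '' U) := by
  have hclosure : closure (ι '' U) ∈ 𝓝 (g * g⁻¹) := by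
    simpa only [map_one, mul_inv_cancel] using closure_image_mem_nhds_of_induced_le hd hle hU
  have hcont : Continuous fun x ↦ g * x⁻¹ := by fun_prop
  obtain ⟨_, hk, k, rfl⟩ :=
    mem_closure_iff_nhds.1 (hd g) _ (hcont.continuousAt.preimage_mem_nhds hclosure)
  exact ⟨k, hk⟩

variable [IsTopologicalGroup K]

-- For `g ∈ G` there is `k : K` with `c = g (ι k)⁻¹` in the closure of a small neighborhood, so
-- conjugation by `g` is conjugation by `ι k`, which is continuous on `K`, followed by
-- conjugation by the small element `c`.
theorem exists_nhds_one_conj_mem_closure_image {ι : K →* G} (hd : DenseRange ι)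
    (hle : τ.induced ι ≤ σ) (g : G) {U : Set K} (hU : U ∈ 𝓝 1) :
    ∃ V ∈ 𝓝 (1 : K), ∀ x ∈ closure (ι '' V), g * x * g⁻¹ ∈ closure (ι '' U) := by
  obtain ⟨W, hW, hWU⟩ := exists_nhds_one_conj_mem hU
  obtain ⟨k, hk⟩ := exists_mul_inv_mem_closure_image hd hle g hW
  have hconj : Continuous fun x : K ↦ k * x * k⁻¹ := by fun_prop
  refine ⟨_, hconj.continuousAt.preimage_mem_nhds (by simpa using hW), fun x hx ↦ ?_⟩
  have hxW : ι k * x * (ι k)⁻¹ ∈ closure (ι '' W) := by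
    refine map_mem_closure (f := fun y ↦ ι k * y * (ι k)⁻¹) (by fun_prop) hx ?_
    rintro _ ⟨u, hu, rfl⟩
    exact ⟨_, hu, by simp⟩
  have hmem : g * (ι k)⁻¹ * (ι k * x * (ι k)⁻¹) * (g * (ι k)⁻¹)⁻¹ ∈ closure (ι '' U) := by
    refine map_mem_closure₂ (f := fun c y ↦ c * y * c⁻¹) (by fun_prop) hk hxW ?_
    rintro _ ⟨u, hu, rfl⟩ _ ⟨v, hv, rfl⟩
    exact ⟨_, hWU u hu v hv, by simp⟩
  simpa [mul_assoc] using hmem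

/-- The closures in `G` of the neighborhoods of `1` in `K`, as a basis of neighborhoods of `1` for
a group topology on `G`. It extends to `G` a group topology `σ` on a dense subgroup (here the range
of `ι`) that is coarser than the subspace topology. -/
abbrev closureImageBasis (ι : K →* G) (hd : DenseRange ι) (hle : τ.induced ι ≤ σ) :
    GroupFilterBasis G where
  sets := {S | ∃ U ∈ 𝓝 (1 : K), closure (ι '' U) = S}
  nonempty := ⟨_, univ, univ_mem, rfl⟩
  inter_sets := by
    rintro _ _ ⟨U, hU, rfl⟩ ⟨V, hV, rfl⟩
    exact ⟨_, ⟨U ∩ V, inter_mem hU hV, rfl⟩,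
      subset_inter (closure_mono (image_mono inter_subset_left))
        (closure_mono (image_mono inter_subset_right))⟩
  one' := by
    rintro _ ⟨U, hU, rfl⟩
    exact subset_closure ⟨1, mem_of_mem_nhds hU, map_one ι⟩
  mul' := by
    rintro _ ⟨U, hU, rfl⟩
    obtain ⟨V, hV, hVU⟩ := exists_nhds_one_split hU
    refine ⟨_, ⟨V, hV, rfl⟩, mul_subset_iff.2 fun a ha b hb ↦
      map_mem_closure₂ continuous_mul ha hb ?_⟩
    rintro _ ⟨u, hu, rfl⟩ _ ⟨v, hv, rfl⟩
    exact ⟨_, hVU u hu v hv, map_mul ι u v⟩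
  inv' := by
    rintro _ ⟨U, hU, rfl⟩
    refine ⟨_, ⟨U⁻¹, inv_mem_nhds_one K hU, rfl⟩, fun a ha ↦ map_mem_closure continuous_inv ha ?_⟩
    rintro _ ⟨u, hu, rfl⟩
    exact ⟨_, hu, map_inv ι u⟩
  conj' := by
    rintro g _ ⟨U, hU, rfl⟩
    obtain ⟨V, hV, hVU⟩ := exists_nhds_one_conj_mem_closure_image hd hle g hU
    exact ⟨_, ⟨V, hV, rfl⟩, hVU⟩

namespace closureImageBasis

variable {ι : K →* G} (hd : DenseRange ι) (hle : τ.induced ι ≤ σ)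

theorem hasBasis_filter : (closureImageBasis ι hd hle).toFilterBasis.filter.HasBasis
    (fun U : Set K ↦ U ∈ 𝓝 1) (fun U ↦ closure (ι '' U)) :=
  ⟨fun _ ↦ (FilterBasis.mem_filter_iff _).trans exists_exists_and_eq_and⟩

theorem nhds_one_le_filter : 𝓝 1 ≤ (closureImageBasis ι hd hle).toFilterBasis.filter :=
  (hasBasis_filter hd hle).ge_iff.2 fun _ hU ↦ by
    simpa only [map_one] using closure_image_mem_nhds_of_induced_le hd hle hU

theorem comap_filter : comap ι (closureImageBasis ι hd hle).toFilterBasis.filter = 𝓝 1 := by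
  refine le_antisymm ?_ ?_
  · refine (closed_nhds_basis 1).ge_iff.2 fun C hC ↦ ?_
    refine mem_of_superset (preimage_mem_comap ((hasBasis_filter hd hle).mem_of_mem hC.1)) ?_
    exact (preimage_closure_image_subset_of_induced_le hle C).trans hC.2.closure_subset
  · refine ((hasBasis_filter hd hle).comap ι).ge_iff.2 fun U hU ↦ ?_
    exact mem_of_superset hU fun u hu ↦ subset_closure (mem_image_of_mem ι hu)

theorem mem_filter_of_isClosed {W : Set G} (hW : IsClosed W) (hιW : ι ⁻¹' W ∈ 𝓝 1) :
    W ∈ (closureImageBasis ι hd hle).toFilterBasis.filter :=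
  (hasBasis_filter hd hle).mem_iff.2
    ⟨_, hιW, closure_minimal (image_preimage_subset ι W) hW⟩

end closureImageBasis

end ClosureImageBasis

theorem exists_monoidHom_t2Space_comap_nhds_one_eq {G : Type u} [Group G]
    (B : GroupFilterBasis G) :
    ∃ (L : Type u) (_ : Group L) (_ : TopologicalSpace L) (_ : IsTopologicalGroup L)
      (_ : T2Space L) (j : G →* L), comap j (𝓝 1) = B.toFilterBasis.filter := by
  let _ := B.topology
  refine ⟨SeparationQuotient G, inferInstance, inferInstance, inferInstance, inferInstance,
    SeparationQuotient.mkMonoidHom, ?_⟩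
  rw [← B.nhds_one_eq]
  exact SeparationQuotient.comap_mk_nhds_mk

theorem exists_monoidHom_isInducing_comp {G : Type u} {K : Type*} [Group G]
    [τ : TopologicalSpace G] [IsTopologicalGroup G] [Group K] [σ : TopologicalSpace K]
    [IsTopologicalGroup K] (ι : K →* G) (hd : DenseRange ι) (hle : τ.induced ι ≤ σ) :
    ∃ (L : Type u) (_ : Group L) (_ : TopologicalSpace L) (_ : IsTopologicalGroup L)
      (_ : T2Space L) (j : G →* L), Continuous j ∧ IsInducing (j.comp ι) ∧
        ∀ W : Set G, IsClosed W → ι ⁻¹' W ∈ 𝓝 1 → W ∈ comap j (𝓝 1) := by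
  obtain ⟨L, _, _, _, _, j, hj⟩ :=
    exists_monoidHom_t2Space_comap_nhds_one_eq (closureImageBasis ι hd hle)
  refine ⟨L, _, _, ‹_›, ‹_›, j, continuous_of_continuousAt_one j ?_,
    IsTopologicalGroup.isInducing_iff_nhds_one.2 ?_, fun W hW hιW ↦ ?_⟩
  · rw [ContinuousAt, map_one, tendsto_iff_comap, hj]
    exact closureImageBasis.nhds_one_le_filter hd hle
  · rw [MonoidHom.coe_comp, ← comap_comap, hj, closureImageBasis.comap_filter]
  · exact hj ▸ closureImageBasis.mem_filter_of_isClosed hd hle hW hιW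

theorem LocallyMinimalWith.mono {G : Type*} [Group G] [TopologicalSpace G] {V W : Set G}
    (h : LocallyMinimalWith V) (hWV : W ⊆ V) : LocallyMinimalWith W :=
  fun σ hle hgroup ht2 hW ↦ h σ hle hgroup ht2 (mem_of_superset hW hWV)

theorem LocallyEssentialWith.mono {G : Type*} [Group G] [TopologicalSpace G] {H : Subgroup G}
    {V W : Set G} (h : LocallyEssentialWith H V) (hWV : W ⊆ V) : LocallyEssentialWith H W :=
  fun N hnormal hclosed hNW ↦ h N hnormal hclosed (hNW.trans hWV)

section Witness

variable {G L : Type*} [Group G] [τ : TopologicalSpace G]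
  [Group L] [TopologicalSpace L] {H : Subgroup G} {V W : Set G}

theorem LocallyEssentialWith.injective [T1Space L] (h : LocallyEssentialWith H V)
    {j : G →* L} (hj : Continuous j) (hjH : Function.Injective (j.comp H.subtype))
    (hV : V ∈ comap j (𝓝 1)) : Function.Injective j := by
  refine (MonoidHom.ker_eq_bot_iff j).1 (h j.ker inferInstance ?_ ?_ ?_)
  · exact isClosed_singleton.preimage hj
  · obtain ⟨O, hO, hOV⟩ := hV
    intro x hx
    exact hOV (by simpa only [mem_preimage, MonoidHom.mem_ker.1 hx] using mem_of_mem_nhds hO)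
  · refine (Subgroup.eq_bot_iff_forall _).2 fun x ⟨hxH, hxj⟩ ↦ ?_
    exact congrArg Subtype.val ((injective_iff_map_eq_one _).1 hjH ⟨x, hxH⟩ hxj)

variable [IsTopologicalGroup L] [T2Space L]

theorem LocallyMinimalWith.isInducing (h : LocallyMinimalWith V) {j : G →* L}
    (hj : Continuous j) (hinj : Function.Injective j) (hV : V ∈ comap j (𝓝 1)) :
    IsInducing j := by
  refine ⟨(h _ hj.le_induced (topologicalGroup_induced j) ?_ ?_).symm⟩
  · exact @T2Space.of_injective_continuous _ _ (_) _ _ _ hinj continuous_induced_dom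
  · rwa [nhds_induced, map_one]

variable [IsTopologicalGroup G]

theorem LocallyMinimalWith.isInducing_of_dense (h : LocallyMinimalWith ((↑) ⁻¹' V : Set H))
    (hH : Dense (H : Set G)) {j : G →* L} (hj : Continuous j)
    (hjH : Function.Injective (j.comp H.subtype)) (hV : V ∈ comap j (𝓝 1)) : IsInducing j := by
  have hV' : (↑) ⁻¹' V ∈ comap (j.comp H.subtype) (𝓝 1) := by
    rw [MonoidHom.coe_comp, ← comap_comap]
    exact preimage_mem_comap hV
  have hrestrict : IsInducing (j.comp H.subtype) :=
    h.isInducing (hj.comp continuous_subtype_val) hjH hV'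
  exact isInducing_of_isInducing_comp_of_denseRange (ι := H.subtype) hH.denseRange_val
    continuous_subtype_val hj hrestrict

theorem LocallyMinimalWith.of_dense (h : LocallyMinimalWith ((↑) ⁻¹' V : Set H))
    (hH : Dense (H : Set G)) : LocallyMinimalWith V := by
  intro s hle hgroup ht2 hV
  obtain ⟨hid⟩ : @IsInducing G G τ s (MonoidHom.id G) :=
    @LocallyMinimalWith.isInducing_of_dense G G _ τ _ s H V hgroup ht2 _ h hH (MonoidHom.id G)
      (continuous_id_iff_le.2 hle) Subtype.val_injective ⟨V, hV, subset_rfl⟩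
  exact (hid.trans induced_id).symm

theorem LocallyMinimalWith.locallyEssentialWith [T0Space G]
    (h : LocallyMinimalWith ((↑) ⁻¹' V : Set H)) (hH : Dense (H : Set G))
    (hWnhds : W ∈ 𝓝 1) (hWV : ∀ v ∈ W, ∀ w ∈ W, v * w ∈ V) : LocallyEssentialWith H W := by
  intro N _ hN hNW hHN
  have hinj : Function.Injective ((QuotientGroup.mk' N).comp H.subtype) := by
    refine (injective_iff_map_eq_one _).2 fun x hx ↦ Subtype.ext ?_
    exact (Subgroup.eq_bot_iff_forall _).1 hHN x ⟨x.2, (QuotientGroup.eq_one_iff _).1 hx⟩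
  have hV : V ∈ comap (QuotientGroup.mk' N) (𝓝 1) := by
    refine ⟨QuotientGroup.mk' N '' W, QuotientGroup.isOpenMap_coe.image_mem_nhds hWnhds, ?_⟩
    rintro x ⟨w, hw, hwx⟩
    simpa using hWV w hw _ (hNW (QuotientGroup.eq.1 hwx))
  have hmk : IsInducing (QuotientGroup.mk' N) :=
    h.isInducing_of_dense hH QuotientGroup.continuous_mk hinj hV
  rw [← QuotientGroup.ker_mk' N, MonoidHom.ker_eq_bot_iff]
  exact hmk.injective

theorem LocallyMinimalWith.subgroup_of_dense (hmin : LocallyMinimalWith V)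
    (hess : LocallyEssentialWith H V) (hH : Dense (H : Set G)) (hW : IsClosed W)
    (hWV : W ⊆ V) : LocallyMinimalWith ((↑) ⁻¹' W : Set H) := by
  intro σ hle _ _ hWσ
  obtain ⟨L, _, _, _, _, j, hj, hjH, hjW⟩ :=
    exists_monoidHom_isInducing_comp (σ := σ) H.subtype hH.denseRange_val hle
  have hV : V ∈ comap j (𝓝 1) := mem_of_superset (hjW W hW hWσ) hWV
  have hinj : Function.Injective j := hess.injective hj hjH.injective hV
  have hind : IsInducing j := hmin.isInducing hj hinj hV
  rw [hjH.eq_induced, MonoidHom.coe_comp, ← induced_compose, ← hind.eq_induced]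
  rfl

end Witness

/-- Local minimality criterion: a dense subgroup `H` of a Hausdorff topological group `G`
is locally minimal iff `G` is locally minimal and `H` is locally essential in `G`. -/
theorem denseSubgroup_locallyMinimal_iff {G : Type*} [Group G] [TopologicalSpace G]
    [IsTopologicalGroup G] [T2Space G] (H : Subgroup G) (hH : Dense (H : Set G)) :
    LocallyMinimal ↥H ↔ LocallyMinimal G ∧ LocallyEssential H := by
  constructor
  · rintro ⟨U, hU, hUmin : LocallyMinimalWith U⟩
    obtain ⟨V, hV, hVU⟩ := (mem_nhds_induced _ _ _).1 hU
    obtain ⟨W, hW, hWV⟩ := exists_nhds_one_split hV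
    have hmin : LocallyMinimalWith ((↑) ⁻¹' V : Set H) := hUmin.mono hVU
    exact ⟨⟨V, hV, hmin.of_dense hH⟩, W, hW, hmin.locallyEssentialWith hH hW hWV⟩
  · rintro ⟨⟨V₁, hV₁, hmin : LocallyMinimalWith V₁⟩, V₂, hV₂, hess : LocallyEssentialWith H V₂⟩
    obtain ⟨W, hW, hWclosed, hWV⟩ := exists_mem_nhds_isClosed_subset (inter_mem hV₁ hV₂)
    refine ⟨(↑) ⁻¹' W, continuous_subtype_val.continuousAt.preimage_mem_nhds hW, ?_⟩
    exact (hmin.mono inter_subset_left).subgroup_of_dense (hess.mono inter_subset_right) hH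
      hWclosed hWV
end

section
/- Let H be a dense locally essential subgroup of a Hausdorff topological group G. Then H is NSnS if and only if G is NSnS. -/
/-- A topological group is *NSnS* (has no small normal subgroups) if some neighborhood
of the identity contains no nontrivial normal subgroup. -/
def IsNSnS (G : Type*) [Group G] [TopologicalSpace G] : Prop :=
  ∃ V ∈ nhds (1 : G), ∀ N : Subgroup G, N.Normal → (N : Set G) ⊆ V → N = ⊥

/-!
Since closed neighborhoods of the identity form a basis, a small normal subgroup has small closure,
so only closed normal subgroups matter for the NSnS property. A nontrivial small closed normal
subgroup of `G` meets a locally essential `H` in a nontrivial small normal subgroup of `H`.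
Conversely, the closure in `G` of a small normal subgroup of `H` is small, and it is normal because
its normalizer is closed and contains the dense subgroup `H`.
-/

open scoped Topology

section Normalizer

variable {G : Type*} [Group G] [TopologicalSpace G]

theorem normalizer_le_normalizer_closure [SeparatelyContinuousMul G] (s : Set G) :
    Subgroup.normalizer s ≤ Subgroup.normalizer (closure s) :=
  Subgroup.le_set_normalizer_iff.2 fun g hg _ hx ↦
    map_mem_closure (f := fun y ↦ g * y * g⁻¹) (by fun_prop) hx fun y hy ↦ (hg y).1 hy

variable [IsTopologicalGroup G]

theorem isClosed_normalizer {s : Set G} (hs : IsClosed s) :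
    IsClosed (Subgroup.normalizer s : Set G) := by
  have normalizer_eq : (Subgroup.normalizer s : Set G) =
      ⋂ x ∈ s, {g | g * x * g⁻¹ ∈ s} ∩ {g | g⁻¹ * x * g ∈ s} := by
    ext g
    simp only [SetLike.mem_coe, Set.mem_iInter, Set.mem_inter_iff, Set.mem_ofPred_eq]
    refine ⟨fun hg x hx ↦ ⟨(hg x).1 hx, (Subgroup.mem_set_normalizer_iff''.1 hg x).1 hx⟩,
      fun hg x ↦ ⟨fun hx ↦ (hg x hx).1, fun hx ↦ ?_⟩⟩
    simpa [mul_assoc] using (hg _ hx).2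
  rw [normalizer_eq]
  exact isClosed_biInter fun x _ ↦
    (hs.preimage (by fun_prop)).inter (hs.preimage (by fun_prop))

theorem normal_topologicalClosure_of_dense_normalizer {N : Subgroup G}
    (hN : Dense (Subgroup.normalizer (N : Set G) : Set G)) : N.topologicalClosure.Normal := by
  have dense_normalizer_closure : Dense (Subgroup.normalizer (closure (N : Set G)) : Set G) :=
    hN.mono (normalizer_le_normalizer_closure _)
  rw [← Subgroup.normalizer_eq_top_iff, Subgroup.topologicalClosure_coe, ← SetLike.coe_set_eq,
    Subgroup.coe_top, ← (isClosed_normalizer isClosed_closure).closure_eq]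
  exact dense_normalizer_closure.closure_eq

theorem normal_topologicalClosure_map {H : Type*} [Group H] {f : H →* G} (hf : DenseRange f)
    (N : Subgroup H) [N.Normal] : (N.map f).topologicalClosure.Normal := by
  have range_le_normalizer : f.range ≤ Subgroup.normalizer (N.map f : Set G) := by
    rw [MonoidHom.range_eq_map, ← N.normalizer_eq_top]
    exact Subgroup.le_normalizer_map f
  exact normal_topologicalClosure_of_dense_normalizer (hf.mono range_le_normalizer)

end Normalizer

section NSnS

variable {G : Type*} [Group G] [TopologicalSpace G] [IsTopologicalGroup G]

variable (G) in
theorem isNSnS_tfae :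
    [IsNSnS G,
      ∃ V ∈ 𝓝 (1 : G), ∀ N : Subgroup G, N.Normal → IsClosed (N : Set G) → (N : Set G) ⊆ V → N = ⊥,
      ∃ V ∈ 𝓝 (1 : G), ∀ N : Subgroup G, N.topologicalClosure.Normal → (N : Set G) ⊆ V → N = ⊥
    ].TFAE := by
  tfae_have 1 → 2 := fun ⟨V, hV, eq_bot⟩ ↦ ⟨V, hV, fun N hN _ ↦ eq_bot N hN⟩
  tfae_have 2 → 3 := by
    rintro ⟨V, hV, eq_bot⟩
    obtain ⟨C, hC, C_closed, hCV⟩ := exists_mem_nhds_isClosed_subset hV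
    refine ⟨C, hC, fun N hN hNC ↦ eq_bot_mono N.le_topologicalClosure ?_⟩
    exact eq_bot _ hN N.isClosed_topologicalClosure ((closure_minimal hNC C_closed).trans hCV)
  tfae_have 3 → 1 := fun ⟨V, hV, eq_bot⟩ ↦
    ⟨V, hV, fun N _ ↦ eq_bot N N.is_normal_topologicalClosure⟩
  tfae_finish

theorem IsNSnS.of_denseRange {H : Type*} [Group H] [TopologicalSpace H] {f : H →* G}
    (hG : IsNSnS G) (hf : Continuous f) (f_inj : Function.Injective f) (f_dense : DenseRange f) :
    IsNSnS H := by
  obtain ⟨V, hV, eq_bot⟩ := ((isNSnS_tfae G).out 0 2).1 hG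
  refine ⟨f ⁻¹' V, hf.tendsto' 1 1 (map_one f) hV, fun N _ hNV ↦ ?_⟩
  have map_eq_bot : N.map f = ⊥ :=
    eq_bot _ (normal_topologicalClosure_map f_dense N) (Set.image_subset_iff.2 hNV)
  exact (Subgroup.map_eq_bot_iff_of_injective N f_inj).1 map_eq_bot

theorem LocallyEssential.isNSnS {H : Subgroup G} (hess : LocallyEssential H) (hH : IsNSnS H) :
    IsNSnS G := by
  obtain ⟨V, hV, eq_bot_of_inf_eq_bot⟩ := hess
  obtain ⟨W, hW, eq_bot_of_subset⟩ := hH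
  obtain ⟨U, hU, hUW⟩ := mem_nhds_subtype (H : Set G) 1 W |>.1 hW
  apply ((isNSnS_tfae G).out 0 1).2
  refine ⟨U ∩ V, Filter.inter_mem hU hV, fun N hN N_closed hNUV ↦ ?_⟩
  have subgroupOf_eq_bot : N.subgroupOf H = ⊥ :=
    eq_bot_of_subset _ inferInstance fun _ hx ↦ hUW (hNUV hx).1
  have inf_eq_bot : H ⊓ N = ⊥ := (Subgroup.subgroupOf_eq_bot.1 subgroupOf_eq_bot).symm.eq_bot
  exact eq_bot_of_inf_eq_bot N hN N_closed (fun _ hx ↦ (hNUV hx).2) inf_eq_bot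

theorem denseLocallyEssential_NSnS_iff_general (H : Subgroup G) (hH : Dense (H : Set G))
    (hess : LocallyEssential H) : IsNSnS H ↔ IsNSnS G :=
  ⟨hess.isNSnS, fun hG ↦ hG.of_denseRange (f := H.subtype) continuous_subtype_val
    H.subtype_injective hH.denseRange_val⟩

end NSnS

/-- If `H` is a dense locally essential subgroup of a Hausdorff topological group `G`,
then `H` is NSnS iff `G` is NSnS. -/
theorem denseLocallyEssential_NSnS_iff {G : Type*} [Group G] [TopologicalSpace G]
    [IsTopologicalGroup G] [T2Space G] (H : Subgroup G) (hH : Dense (H : Set G))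
    (hess : LocallyEssential H) :
    IsNSnS ↥H ↔ IsNSnS G :=
  denseLocallyEssential_NSnS_iff_general H hH hess
end

section
/- For every prime p and every increasing sequence (m_n) of natural numbers, the abelian group ⊕_{n∈ℕ} ℤ(p^{m_n}) admits a non-discrete locally quasi-convex UFSS group topology. -/
open scoped DirectSum

/-- `(1/n)U = {x : kx ∈ U for all 1 ≤ k ≤ n}`. -/
def invDiv {G : Type*} [AddGroup G] (n : ℕ) (U : Set G) : Set G :=
  {x | ∀ k : ℕ, 1 ≤ k → k ≤ n → k • x ∈ U}

/-- A Hausdorff topological abelian group is *UFSS* (uniformly free from small subgroups)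
if there is a symmetric neighborhood `U` of `0` such that the sets `(1/n)U`, `n ∈ ℕ`,
form a neighborhood basis at `0`. -/
def IsUFSS (G : Type*) [AddGroup G] [TopologicalSpace G] : Prop :=
  ∃ U ∈ nhds (0 : G), (∀ x ∈ U, -x ∈ U) ∧
    (∀ n : ℕ, 1 ≤ n → invDiv n U ∈ nhds (0 : G)) ∧
    (∀ V ∈ nhds (0 : G), ∃ n : ℕ, 1 ≤ n ∧ invDiv n U ⊆ V)

/-- `𝕋₊`, the image of `[-1/4, 1/4]` in `𝕋 = ℝ/ℤ`. -/
noncomputable def Tplus : Set UnitAddCircle :=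
  (fun r : ℝ => (r : UnitAddCircle)) '' Set.Icc (-(1/4) : ℝ) (1/4)

/-- The polar of a subset `A` of a topological abelian group: all continuous characters
`χ : G → 𝕋` with `χ(A) ⊆ 𝕋₊`. -/
def polar {G : Type*} [AddGroup G] [TopologicalSpace G] (A : Set G) :
    Set (G →+ UnitAddCircle) :=
  {χ | Continuous χ ∧ ∀ x ∈ A, χ x ∈ Tplus}

/-- A subset `A` is *quasi-convex* if it coincides with its quasi-convex hull
`{x : χ(x) ∈ 𝕋₊ for all χ in the polar of A}`. -/
def IsQuasiConvex {G : Type*} [AddGroup G] [TopologicalSpace G] (A : Set G) : Prop :=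
  A = {x | ∀ χ ∈ polar A, χ x ∈ Tplus}

/-- A topological abelian group is *locally quasi-convex* if it has a neighborhood basis
at `0` consisting of quasi-convex sets. -/
def IsLocallyQuasiConvex (G : Type*) [AddGroup G] [TopologicalSpace G] : Prop :=
  ∀ V ∈ nhds (0 : G), ∃ A : Set G, IsQuasiConvex A ∧ A ∈ nhds (0 : G) ∧ A ⊆ V

/-!
A faithful character of each `ℤ(N i)` embeds `⨁ i, ℤ(N i)` in the group `ℓ^∞(ι, 𝕋)` of all families
in `𝕋`, from which it inherits the topology of uniform convergence. In `𝕋`, and hence in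
`ℓ^∞(ι, 𝕋)`, closed balls around `0` satisfy `(1/n) B(1/4) = B(1/(4n))`: the multiples of a point of
`B(1/4)` advance in steps of length at most `1/4`, too short to jump over the complement of
`B(1/4)`, so they leave `B(1/4)` as soon as they would in `ℝ`. Thus `B(1/4)` witnesses UFSS. It is
also quasi-convex, being cut out by the coordinate characters, and `(1/n)` preserves
quasi-convexity, so the topology is locally quasi-convex. It is not discrete because the generator
of `ℤ(N i)` has norm at most `1 / N i`, which becomes arbitrarily small.
-/

open Filter Function Metric Set Topology
open scoped ENNReal

section InvDiv

variable {G H : Type*} [AddGroup G] [AddGroup H]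

theorem invDiv_preimage (f : G →+ H) (n : ℕ) (U : Set H) :
    invDiv n (f ⁻¹' U) = f ⁻¹' invDiv n U := by
  simp only [invDiv, mem_preimage, map_nsmul, preimage_ofPred_eq]

theorem IsUFSS.of_isInducing [TopologicalSpace G] [TopologicalSpace H] {f : G →+ H}
    (hf : IsInducing f) (hH : IsUFSS H) : IsUFSS G := by
  have nhds_zero : 𝓝 (0 : G) = comap f (𝓝 0) := by rw [hf.nhds_eq_comap, map_zero]
  obtain ⟨U, hU, hsymm, hmem, hbasis⟩ := hH
  simp only [IsUFSS, nhds_zero]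
  refine ⟨f ⁻¹' U, preimage_mem_comap hU, fun x hx ↦ ?_, fun n hn ↦ ?_, ?_⟩
  · simpa only [mem_preimage, map_neg] using hsymm (f x) hx
  · rw [invDiv_preimage]
    exact preimage_mem_comap (hmem n hn)
  · rintro V ⟨W, hW, hWV⟩
    obtain ⟨n, hn, hnW⟩ := hbasis W hW
    refine ⟨n, hn, ?_⟩
    rw [invDiv_preimage]
    exact (preimage_mono hnW).trans hWV

theorem isUFSS_of_hasBasis_invDiv [TopologicalSpace G] {U : Set G} (hsymm : ∀ x ∈ U, -x ∈ U)
    (hU : (𝓝 (0 : G)).HasBasis (fun n : ℕ ↦ 1 ≤ n) fun n ↦ invDiv n U) : IsUFSS G := by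
  refine ⟨U, ?_, hsymm, fun n hn ↦ hU.mem_of_mem hn, fun V hV ↦ hU.mem_iff.1 hV⟩
  refine mem_of_superset (hU.mem_of_mem le_rfl) fun x hx ↦ ?_
  simpa only [one_nsmul] using hx 1 le_rfl le_rfl

end InvDiv

section QuasiConvex

variable {G H : Type*} [AddGroup G] [TopologicalSpace G] [AddGroup H] [TopologicalSpace H]

theorem isQuasiConvex_iff {A : Set G} :
    IsQuasiConvex A ↔ ∀ x, (∀ χ ∈ polar A, χ x ∈ Tplus) → x ∈ A :=
  ⟨fun hA _ hx ↦ hA ▸ hx, fun hA ↦ Subset.antisymm (fun x hx _ hχ ↦ hχ.2 x hx) hA⟩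

theorem polar_anti {A B : Set G} (hAB : A ⊆ B) : polar B ⊆ polar A :=
  fun _ hχ ↦ ⟨hχ.1, fun x hx ↦ hχ.2 x (hAB hx)⟩

theorem isQuasiConvex_Tplus : IsQuasiConvex Tplus :=
  isQuasiConvex_iff.2 fun _ ht ↦ ht (AddMonoidHom.id _) ⟨continuous_id, fun _ ↦ id⟩

theorem IsQuasiConvex.preimage {A : Set H} (hA : IsQuasiConvex A) {f : G →+ H}
    (hf : Continuous f) : IsQuasiConvex (f ⁻¹' A) :=
  isQuasiConvex_iff.2 fun x hx ↦ isQuasiConvex_iff.1 hA (f x) fun χ hχ ↦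
    hx (χ.comp f) ⟨hχ.1.comp hf, fun y hy ↦ hχ.2 (f y) hy⟩

theorem IsQuasiConvex.iInter {κ : Sort*} {A : κ → Set G} (hA : ∀ j, IsQuasiConvex (A j)) :
    IsQuasiConvex (⋂ j, A j) :=
  isQuasiConvex_iff.2 fun x hx ↦ mem_iInter.2 fun j ↦ isQuasiConvex_iff.1 (hA j) x fun χ hχ ↦
    hx χ (polar_anti (iInter_subset A j) hχ)

theorem IsLocallyQuasiConvex.of_isInducing {f : G →+ H} (hf : IsInducing f)
    (hH : IsLocallyQuasiConvex H) : IsLocallyQuasiConvex G := by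
  have nhds_zero : 𝓝 (0 : G) = comap f (𝓝 0) := by rw [hf.nhds_eq_comap, map_zero]
  simp only [IsLocallyQuasiConvex, nhds_zero]
  rintro V ⟨W, hW, hWV⟩
  obtain ⟨A, hA, hA_nhds, hAW⟩ := hH W hW
  exact ⟨f ⁻¹' A, hA.preimage hf.continuous, preimage_mem_comap hA_nhds,
    (preimage_mono hAW).trans hWV⟩

end QuasiConvex

section QuasiConvexInvDiv

variable {G : Type*} [AddCommGroup G] [TopologicalSpace G] [ContinuousAdd G] {U : Set G}

theorem IsQuasiConvex.invDiv (hU : IsQuasiConvex U) (n : ℕ) : IsQuasiConvex (invDiv n U) := by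
  have invDiv_eq : _root_.invDiv n U =
      ⋂ (k : ℕ) (_ : 1 ≤ k) (_ : k ≤ n), nsmulAddMonoidHom k ⁻¹' U := by
    ext x
    simp only [_root_.invDiv, mem_ofPred_eq, mem_iInter, mem_preimage, nsmulAddMonoidHom_apply]
  rw [invDiv_eq]
  exact .iInter fun k ↦ .iInter fun _ ↦ .iInter fun _ ↦ hU.preimage (continuous_nsmul k)

theorem IsQuasiConvex.isLocallyQuasiConvex (hU : IsQuasiConvex U)
    (hbasis : (𝓝 (0 : G)).HasBasis (fun n : ℕ ↦ 1 ≤ n) fun n ↦ _root_.invDiv n U) :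
    IsLocallyQuasiConvex G := fun _ hV ↦
  let ⟨n, hn, hnV⟩ := hbasis.mem_iff.1 hV
  ⟨_root_.invDiv n U, hU.invDiv n, hbasis.mem_of_mem hn, hnV⟩

end QuasiConvexInvDiv

section Norm

variable {E : Type*} [SeminormedAddCommGroup E]

theorem closedBall_div_subset_invDiv_closedBall (n : ℕ) (r : ℝ) :
    closedBall (0 : E) (r / n) ⊆ invDiv n (closedBall 0 r) := by
  intro x hx k hk hkn
  have hn : 1 ≤ n := hk.trans hkn
  rw [mem_closedBall_zero_iff] at hx ⊢
  calc ‖k • x‖ ≤ k * ‖x‖ := norm_nsmul_le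
    _ ≤ n * ‖x‖ := by gcongr
    _ ≤ r := (le_div_iff₀' (by positivity)).1 hx

theorem hasBasis_nhds_zero_invDiv_closedBall {r : ℝ} (hr : 0 < r)
    (h : ∀ n : ℕ, 1 ≤ n → invDiv n (closedBall (0 : E) r) = closedBall 0 (r / n)) :
    (𝓝 (0 : E)).HasBasis (fun n : ℕ ↦ 1 ≤ n) fun n ↦ invDiv n (closedBall 0 r) := by
  have closedBall_basis :
      (𝓝 (0 : E)).HasBasis (fun n : ℕ ↦ 1 ≤ n) fun n : ℕ ↦ closedBall 0 (r / n) := by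
    refine nhds_basis_uniformity (Metric.mk_uniformity_basis_le (fun n hn ↦ by positivity) ?_)
    intro ε hε
    obtain ⟨n, hn⟩ := exists_nat_gt (r / ε)
    have hn0 : (0 : ℝ) < n := (by positivity : 0 < r / ε).trans hn
    exact ⟨n, by exact_mod_cast hn0, (div_le_comm₀ hε hn0).1 hn.le⟩
  exact closedBall_basis.congr (fun _ ↦ Iff.rfl) fun n hn ↦ (h n hn).symm

theorem induced_ne_bot_of_exists_norm_lt {G : Type*} [AddGroup G] (f : G →+ E)
    (hf : ∀ ε > 0, ∃ x ≠ 0, ‖f x‖ < ε) :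
    TopologicalSpace.induced f inferInstance ≠ (⊥ : TopologicalSpace G) := by
  let _ : TopologicalSpace G := .induced f inferInstance
  intro hbot
  have : DiscreteTopology G := ⟨hbot⟩
  have zero_mem : {0} ∈ comap f (𝓝 0) := by
    rw [← map_zero f, ← nhds_induced, nhds_discrete]
    exact mem_pure.2 rfl
  obtain ⟨ε, hε, hsub⟩ := (nhds_basis_ball.comap f).mem_iff.1 zero_mem
  obtain ⟨x, hx0, hx⟩ := hf ε hε
  exact hx0 (hsub (mem_ball_zero_iff.2 hx))

end Norm

section Circle

variable {p : ℝ}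

theorem exists_coe_eq_abs_eq_norm (t : AddCircle p) :
    ∃ r : ℝ, (r : AddCircle p) = t ∧ |r| = ‖t‖ := by
  induction t using QuotientAddGroup.induction_on with
  | H x =>
    refine ⟨x - round (p⁻¹ * x) * p, ?_, (AddCircle.norm_eq p).symm⟩
    rw [AddCircle.coe_sub, sub_eq_self, AddCircle.coe_eq_zero_iff]
    exact ⟨round (p⁻¹ * x), zsmul_eq_mul _ _⟩

theorem norm_nsmul_addCircle_of_le (hp : p ≠ 0) {t : AddCircle p} {n : ℕ}
    (h : n * ‖t‖ ≤ |p| / 2) : ‖n • t‖ = n * ‖t‖ := by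
  obtain ⟨r, rfl, hr⟩ := exists_coe_eq_abs_eq_norm t
  have abs_nsmul : |n • r| = n * ‖(r : AddCircle p)‖ := by
    rw [nsmul_eq_mul, abs_mul, Nat.abs_cast, hr]
  rw [← AddCircle.coe_nsmul, (AddCircle.norm_coe_eq_abs_iff p hp).2 (abs_nsmul ▸ h), abs_nsmul]

theorem mul_norm_le_of_mem_invDiv_closedBall (hp : p ≠ 0) {r : ℝ} (hr : r ≤ |p| / 4)
    {t : AddCircle p} {n : ℕ} (hn : 1 ≤ n) (ht : t ∈ invDiv n (closedBall 0 r)) :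
    n * ‖t‖ ≤ r := by
  replace ht : ∀ k, 1 ≤ k → k ≤ n → ‖k • t‖ ≤ r := fun k h1 hk ↦
    mem_closedBall_zero_iff.1 (ht k h1 hk)
  induction n, hn using Nat.le_induction with
  | base => simpa using ht 1 le_rfl le_rfl
  | succ n _ ih =>
    have n_mul_le : n * ‖t‖ ≤ r := ih fun k h1 hk ↦ ht k h1 (hk.trans n.le_succ)
    have norm_le : ‖t‖ ≤ r := by simpa using ht 1 le_rfl n.succ_pos
    have succ_mul_le : (n + 1 : ℕ) * ‖t‖ ≤ |p| / 2 := by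
      push_cast
      linarith
    exact (norm_nsmul_addCircle_of_le hp succ_mul_le).symm.trans_le
      (ht (n + 1) n.succ_pos le_rfl)

theorem invDiv_closedBall_addCircle (hp : p ≠ 0) {r : ℝ} (hr : r ≤ |p| / 4) {n : ℕ} (hn : 1 ≤ n) :
    invDiv n (closedBall (0 : AddCircle p) r) = closedBall 0 (r / n) := by
  refine Subset.antisymm (fun t ht ↦ ?_) (closedBall_div_subset_invDiv_closedBall n r)
  rw [mem_closedBall_zero_iff, le_div_iff₀' (by positivity)]
  exact mul_norm_le_of_mem_invDiv_closedBall hp hr hn ht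

theorem Tplus_eq_closedBall : Tplus = closedBall 0 (1 / 4) := by
  ext t
  rw [mem_closedBall_zero_iff]
  constructor
  · rintro ⟨r, hr, rfl⟩
    exact QuotientAddGroup.norm_mk_le_norm.trans (abs_le.2 hr)
  · intro ht
    obtain ⟨r, rfl, hr⟩ := exists_coe_eq_abs_eq_norm t
    exact ⟨r, abs_le.1 (hr.trans_le ht), rfl⟩

end Circle

section LInfty

variable {ι : Type*} {E : ι → Type*} [∀ i, NormedAddCommGroup (E i)]

theorem mem_closedBall_zero_lp_iff {r : ℝ} (hr : 0 ≤ r) {x : lp E ∞} :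
    x ∈ closedBall 0 r ↔ ∀ i, x i ∈ closedBall 0 r := by
  simp only [mem_closedBall_zero_iff]
  exact ⟨fun hx i ↦ (lp.norm_apply_le_norm ENNReal.top_ne_zero x i).trans hx,
    lp.norm_le_of_forall_le hr⟩

theorem invDiv_closedBall_lp {r : ℝ} (hr : 0 ≤ r) {n : ℕ}
    (hE : ∀ i, invDiv n (closedBall (0 : E i) r) = closedBall 0 (r / n)) :
    invDiv n (closedBall (0 : lp E ∞) r) = closedBall 0 (r / n) := by
  ext x
  rw [mem_closedBall_zero_lp_iff (by positivity)]
  simp only [← hE, invDiv, mem_ofPred_eq, mem_closedBall_zero_lp_iff hr]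
  exact ⟨fun hx i k h1 hk ↦ hx k h1 hk i, fun hx k h1 hk i ↦ hx i k h1 hk⟩

/-- The `i`-th coordinate `ℓ^q(ι, E) → E i`, as a homomorphism of additive groups. Unlike
`lp.evalCLM`, it does not need the `E i` to be modules over a normed ring. -/
noncomputable def lpCoordHom (q : ℝ≥0∞) (i : ι) : lp E q →+ E i :=
  (Pi.evalAddMonoidHom E i).comp (lp E q).subtype

theorem continuous_lpCoordHom (q : ℝ≥0∞) [Fact (1 ≤ q)] (i : ι) :
    Continuous (lpCoordHom (E := E) q i) :=
  (lp.lipschitzWith_one_eval q i).continuous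

end LInfty

section LInftyCircle

variable (ι : Type*)

/-- The group `ℓ^∞(ι, 𝕋)` of all families in `𝕋` indexed by `ι`, with the sup norm. -/
abbrev LInftyCircle : Type _ := lp (fun _ : ι ↦ UnitAddCircle) ∞

theorem hasBasis_nhds_zero_lInftyCircle :
    (𝓝 (0 : LInftyCircle ι)).HasBasis (fun n : ℕ ↦ 1 ≤ n)
      fun n ↦ invDiv n (closedBall 0 (1 / 4)) :=
  hasBasis_nhds_zero_invDiv_closedBall (by norm_num) fun _ hn ↦
    invDiv_closedBall_lp (by norm_num) fun _ ↦
      invDiv_closedBall_addCircle one_ne_zero (by norm_num) hn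

theorem isQuasiConvex_closedBall_lInftyCircle :
    IsQuasiConvex (closedBall (0 : LInftyCircle ι) (1 / 4)) := by
  have closedBall_eq : closedBall (0 : LInftyCircle ι) (1 / 4) =
      ⋂ i, lpCoordHom ∞ i ⁻¹' Tplus := by
    ext x
    rw [mem_closedBall_zero_lp_iff (by norm_num), Tplus_eq_closedBall, mem_iInter]
    rfl
  rw [closedBall_eq]
  exact .iInter fun i ↦ isQuasiConvex_Tplus.preimage (continuous_lpCoordHom ∞ i)

theorem isUFSS_lInftyCircle : IsUFSS (LInftyCircle ι) :=
  isUFSS_of_hasBasis_invDiv (fun x hx ↦ by simpa using hx) (hasBasis_nhds_zero_lInftyCircle ι)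

theorem isLocallyQuasiConvex_lInftyCircle : IsLocallyQuasiConvex (LInftyCircle ι) :=
  (isQuasiConvex_closedBall_lInftyCircle ι).isLocallyQuasiConvex
    (hasBasis_nhds_zero_lInftyCircle ι)

end LInftyCircle

section DirectSumEmbedding

variable {ι : Type*} {G : ι → Type*} [∀ i, AddCommGroup (G i)]

section ToLp

variable [DecidableEq ι] {E : ι → Type*} [∀ i, NormedAddCommGroup (E i)]
  (q : ℝ≥0∞) (φ : ∀ i, G i →+ E i)

/-- The homomorphism `⨁ i, G i → ℓ^q(ι, E)` that acts as `φ i` in the `i`-th coordinate. -/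
noncomputable def directSumToLp : (⨁ i, G i) →+ lp E q :=
  DirectSum.toAddMonoid fun i ↦ (lp.singleAddMonoidHom q i).comp (φ i)

theorem directSumToLp_of (i : ι) (a : G i) :
    directSumToLp q φ (DirectSum.of G i a) = lp.single q i (φ i a) :=
  DirectSum.toAddMonoid_of _ i a

theorem directSumToLp_apply (x : ⨁ i, G i) (i : ι) : directSumToLp q φ x i = φ i (x i) := by
  induction x using DirectSum.induction_on with
  | zero => simp
  | of j a =>
    rw [directSumToLp_of, lp.single_apply]
    obtain rfl | hij := eq_or_ne i j
    · rw [Pi.single_eq_same, DirectSum.of_eq_same]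
    · rw [Pi.single_eq_of_ne hij, DirectSum.of_eq_of_ne _ _ _ hij, map_zero]
  | add x y hx hy => simp [hx, hy]

variable {φ} in
theorem directSumToLp_injective (hφ : ∀ i, Injective (φ i)) : Injective (directSumToLp q φ) := by
  refine fun x y hxy ↦ DFinsupp.ext fun i ↦ hφ i ?_
  rw [← directSumToLp_apply, hxy, directSumToLp_apply]

variable {q} in
theorem norm_directSumToLp_of (hq : 0 < q) (i : ι) (a : G i) :
    ‖directSumToLp q φ (DirectSum.of G i a)‖ = ‖φ i a‖ := by
  rw [directSumToLp_of, lp.norm_single hq]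

end ToLp

theorem exists_nondiscrete_lqc_ufss_topology_of_injective_characters
    {χ : ∀ i, G i →+ UnitAddCircle} (hχ : ∀ i, Injective (χ i))
    (hsmall : ∀ ε > 0, ∃ i, ∃ a ≠ 0, ‖χ i a‖ < ε) :
    ∃ τ : TopologicalSpace (⨁ i, G i),
      @IsTopologicalAddGroup _ τ _ ∧ @T2Space _ τ ∧ τ ≠ ⊥ ∧
      @IsUFSS _ _ τ ∧ @IsLocallyQuasiConvex _ _ τ := by
  classical
  let f : (⨁ i, G i) →+ LInftyCircle ι := directSumToLp ∞ χ
  let _ : TopologicalSpace (⨁ i, G i) := .induced f inferInstance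
  have hf : IsInducing f := ⟨rfl⟩
  refine ⟨inferInstance, topologicalAddGroup_induced f,
    .of_injective_continuous (directSumToLp_injective ∞ hχ) hf.continuous,
    induced_ne_bot_of_exists_norm_lt f fun ε hε ↦ ?_,
    (isUFSS_lInftyCircle ι).of_isInducing hf,
    (isLocallyQuasiConvex_lInftyCircle ι).of_isInducing hf⟩
  obtain ⟨i, a, ha, hlt⟩ := hsmall ε hε
  exact ⟨DirectSum.of G i a, (map_ne_zero_iff _ (DirectSum.of_injective i)).2 ha,
    (norm_directSumToLp_of χ ENNReal.zero_lt_top i a).trans_lt hlt⟩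

end DirectSumEmbedding

theorem norm_toAddCircle_one_le (N : ℕ) [NeZero N] :
    ‖ZMod.toAddCircle (1 : ZMod N)‖ ≤ 1 / N := by
  have toAddCircle_one : ZMod.toAddCircle (1 : ZMod N) = ((1 / N : ℝ) : UnitAddCircle) := by
    simpa using ZMod.toAddCircle_intCast (N := N) 1
  calc ‖ZMod.toAddCircle (1 : ZMod N)‖ ≤ ‖(1 / N : ℝ)‖ :=
        toAddCircle_one ▸ QuotientAddGroup.norm_mk_le_norm
    _ = 1 / N := Real.norm_of_nonneg (by positivity)

theorem directSum_admits_nondiscrete_lqc_ufss_topology_general {ι : Type*} (N : ι → ℕ)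
    [∀ i, NeZero (N i)] (hN : ¬ BddAbove (range N)) :
    ∃ τ : TopologicalSpace (⨁ i, ZMod (N i)),
      @IsTopologicalAddGroup _ τ _ ∧ @T2Space _ τ ∧ τ ≠ ⊥ ∧
      @IsUFSS _ _ τ ∧ @IsLocallyQuasiConvex _ _ τ := by
  refine exists_nondiscrete_lqc_ufss_topology_of_injective_characters
    (fun i ↦ ZMod.toAddCircle_injective (N i)) fun ε hε ↦ ?_
  obtain ⟨k, hk⟩ := exists_nat_one_div_lt hε
  obtain ⟨-, ⟨i, rfl⟩, hi⟩ := not_bddAbove_iff.1 hN (k + 1)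
  have : Fact (1 < N i) := ⟨by omega⟩
  refine ⟨i, 1, one_ne_zero, ?_⟩
  calc ‖ZMod.toAddCircle (1 : ZMod (N i))‖ ≤ 1 / N i := norm_toAddCircle_one_le (N i)
    _ ≤ 1 / (k + 1) := by gcongr; exact_mod_cast hi.le
    _ < ε := hk

/-- For every prime `p` and every increasing sequence `(m_n)` of natural numbers, the
group `⊕_{n∈ℕ} ℤ(p^{m_n})` admits a non-discrete locally quasi-convex UFSS group
topology. -/
theorem directSum_admits_nondiscrete_lqc_ufss_topology (p : ℕ) (hp : p.Prime)
    (m : ℕ → ℕ) (hm : StrictMono m) :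
    ∃ τ : TopologicalSpace (⨁ n : ℕ, ZMod (p ^ m n)),
      @IsTopologicalAddGroup _ τ _ ∧ @T2Space _ τ ∧ τ ≠ ⊥ ∧
      @IsUFSS _ _ τ ∧ @IsLocallyQuasiConvex _ _ τ := by
  have : NeZero p := ⟨hp.ne_zero⟩
  exact directSum_admits_nondiscrete_lqc_ufss_topology_general (fun n ↦ p ^ m n)
    ((pow_right_strictMono₀ hp.one_lt).comp hm).not_bddAbove_range_of_wellFoundedLT
end
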